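/- (Mountain pass lemma of Ambrosetti–Rabinowitz.) Let I be a C¹-functional defined on a Banach space X. Assume that I satisfies the Palais–Smale condition and that there exist an open set U ⊂ X, u₀ ∈ U, and u₁ ∈ X \ closure(U) such that inf_{u ∈ ∂U} I(u) > max{I(u₀), I(u₁)}. Then I has a critical point at the level c := inf_{γ ∈ Γ} max_{u ∈ γ([0,1])} I(u) ≥ inf_{u ∈ ∂U} I(u), where Γ = {γ ∈ C([0,1],X) : γ(0) = u₀, γ(1) = u₁} is the class of paths in X joining u₀ and u₁. -/

import Mathlib

open Filter Topology Set

noncomputable section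

/-- `I` satisfies the Palais–Smale condition: every sequence along which `I` is bounded and
`I' → 0` in `X*` has a convergent subsequence. -/
def PalaisSmale {X : Type*} [NormedAddCommGroup X] [NormedSpace ℝ X]
    (I : X → ℝ) (I' : X → (X →L[ℝ] ℝ)) : Prop :=
  ∀ s : ℕ → X, (∃ M : ℝ, ∀ j, |I (s j)| ≤ M) →
    Tendsto (fun j => ‖I' (s j)‖) atTop (𝓝 0) →
    ∃ (x : X) (σ : ℕ → ℕ), StrictMono σ ∧ Tendsto (fun j => s (σ j)) atTop (𝓝 x)

/-- The mountain pass level: `c = inf_{γ ∈ Γ} max_{t ∈ [0,1]} I(γ(t))`, where `Γ` is the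
class of continuous paths joining `u₀` and `u₁`. -/
def mountainPassLevel {X : Type*} [NormedAddCommGroup X] [NormedSpace ℝ X]
    (I : X → ℝ) (u₀ u₁ : X) : ℝ :=
  sInf {r : ℝ | ∃ γ : ℝ → X, ContinuousOn γ (Set.Icc 0 1) ∧ γ 0 = u₀ ∧ γ 1 = u₁ ∧
    r = sSup ((fun t => I (γ t)) '' Set.Icc (0:ℝ) 1)}

/-- The variational principle of Ekeland. -/
theorem ekeland_aux {E : Type*} [MetricSpace E] [CompleteSpace E] (Φ : E → ℝ)
    (hΦ : LowerSemicontinuous Φ) (b : ℝ) (hb : ∀ x, b ≤ Φ x) (ε : ℝ) (hε : 0 < ε) (x₀ : E) :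
    ∃ y, Φ y ≤ Φ x₀ ∧ ∀ z, Φ y ≤ Φ z + ε * dist y z := by
  have step : ∀ x, ∃ z, Φ z + ε * dist x z ≤ Φ x ∧
      ∀ w, Φ w + ε * dist x w ≤ Φ x → 2 * Φ z ≤ Φ x + Φ w := by
    intro x
    by_cases h : ∀ w, Φ w + ε * dist x w ≤ Φ x → Φ x ≤ Φ w
    · exact ⟨x, by simp, fun w hw => by linarith [h w hw]⟩
    · push Not at h
      obtain ⟨w₀, hw₀, hlt⟩ := h
      set S : Set ℝ := Φ '' {w | Φ w + ε * dist x w ≤ Φ x} with hS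
      have hSb : BddBelow S := ⟨b, by rintro _ ⟨w, _, rfl⟩; exact hb w⟩
      have hSn : S.Nonempty := ⟨Φ w₀, w₀, hw₀, rfl⟩
      have h1 : sInf S ≤ Φ w₀ := csInf_le hSb ⟨w₀, hw₀, rfl⟩
      obtain ⟨_, ⟨z, hz, rfl⟩, hzlt⟩ :=
        exists_lt_of_csInf_lt hSn (show sInf S < (Φ x + sInf S) / 2 by linarith)
      refine ⟨z, hz, fun w hw => ?_⟩
      have : sInf S ≤ Φ w := csInf_le hSb ⟨w, hw, rfl⟩
      linarith
  choose f hf1 hf2 using step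
  let x : ℕ → E := fun n => f^[n] x₀
  have hxs : ∀ n, x (n + 1) = f (x n) := fun n => Function.iterate_succ_apply' f n x₀
  have hmono : ∀ n k, Φ (x (n + k)) + ε * dist (x n) (x (n + k)) ≤ Φ (x n) := by
    intro n k
    induction k with
    | zero => simp
    | succ k ih =>
      have h1 := hf1 (x (n + k))
      rw [← hxs] at h1
      have h2 := dist_triangle (x n) (x (n + k)) (x (n + k + 1))
      have h3 := mul_le_mul_of_nonneg_left h2 hε.le
      rw [← add_assoc]
      linarith
  have hanti : Antitone (fun n => Φ (x n)) := by
    refine antitone_nat_of_succ_le fun n => ?_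
    have := hmono n 1
    have h2 : 0 ≤ ε * dist (x n) (x (n + 1)) := by positivity
    linarith
  have hlim := tendsto_atTop_ciInf hanti ⟨b, by rintro _ ⟨n, rfl⟩; exact hb _⟩
  set l := ⨅ n, Φ (x n) with hl
  have hlle : ∀ n, l ≤ Φ (x n) := fun n => hanti.le_of_tendsto hlim n
  have hcau : CauchySeq x := by
    refine cauchySeq_of_le_tendsto_0' (fun n => (Φ (x n) - l) / ε) ?_ ?_
    · intro n m hnm
      obtain ⟨k, rfl⟩ := Nat.exists_eq_add_of_le hnm
      rw [le_div_iff₀ hε]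
      linarith [hmono n k, hlle (n + k)]
    · have := (hlim.sub_const l).div_const ε
      simpa using this
  obtain ⟨y, hy⟩ := cauchySeq_tendsto_of_complete hcau
  have hyS : ∀ n, Φ y + ε * dist (x n) y ≤ Φ (x n) := by
    intro n
    have hlsc : LowerSemicontinuous (fun z => Φ z + ε * dist (x n) z) :=
      hΦ.add (Continuous.lowerSemicontinuous (by fun_prop))
    have hcl := hlsc.isClosed_preimage (Φ (x n))
    refine hcl.mem_of_tendsto hy ?_
    filter_upwards [eventually_ge_atTop n] with m hm
    obtain ⟨k, rfl⟩ := Nat.exists_eq_add_of_le hm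
    exact hmono n k
  have hyle : ∀ n, Φ y ≤ Φ (x n) := fun n => by
    have h2 : 0 ≤ ε * dist (x n) y := by positivity
    linarith [hyS n]
  refine ⟨y, hyle 0, fun z => ?_⟩
  by_contra hz
  push Not at hz
  have hzS : ∀ n, Φ z + ε * dist (x n) z ≤ Φ (x n) := fun n => by
    have h3 := mul_le_mul_of_nonneg_left (dist_triangle (x n) y z) hε.le
    linarith [hyS n]
  have h5 : 2 * l ≤ l + Φ z := by
    have h6 := ((tendsto_add_atTop_iff_nat 1).2 hlim).const_mul 2
    refine le_of_tendsto_of_tendsto' h6 (hlim.add_const (Φ z)) fun n => ?_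
    have := hf2 (x n) z (hzS n)
    rwa [← hxs] at this
  have h7 : Φ y ≤ l := ge_of_tendsto' hlim hyle
  have h8 : 0 ≤ ε * dist y z := by positivity
  linarith

/-- If a path `γ` is almost minimal in the sense of Ekeland, then its maximum set contains an
almost critical point. -/
theorem almost_crit_aux {X : Type*} [NormedAddCommGroup X] [NormedSpace ℝ X]
    (I : X → ℝ) (I' : X → (X →L[ℝ] ℝ))
    (hderiv : ∀ x, HasFDerivAt I (I' x) x) (hcont : Continuous I')
    (γ : C(Icc (0:ℝ) 1, X)) (m ε : ℝ) (hε : 0 < ε) (hm : ∀ t, I (γ t) ≤ m)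
    (h0 : I (γ 0) < m) (h1 : I (γ 1) < m)
    (hmin : ∀ η : C(Icc (0:ℝ) 1, X), η 0 = γ 0 → η 1 = γ 1 →
      ∃ t, m - ε * dist γ η ≤ I (η t)) :
    ∃ t, I (γ t) = m ∧ ‖I' (γ t)‖ ≤ 2 * ε := by
  by_contra hcon
  push Not at hcon
  have hIc : Continuous I := continuous_iff_continuousAt.2 fun x => (hderiv x).continuousAt
  have hIγ : Continuous fun t => I (γ t) := hIc.comp γ.continuous
  let T : Icc (0:ℝ) 1 → Set X := fun t =>
    {v | ‖v‖ ≤ 1 ∧ (I (γ t) = m → I' (γ t) v < -(2 * ε)) ∧ (t = 0 ∨ t = 1 → v = 0)}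
  have hTconv : ∀ t, Convex ℝ (T t) := by
    rintro t v ⟨hv1, hv2, hv3⟩ w ⟨hw1, hw2, hw3⟩ a b ha hb hab
    refine ⟨?_, fun ht => ?_, fun ht => by rw [hv3 ht, hw3 ht]; simp⟩
    · calc ‖a • v + b • w‖ ≤ ‖a • v‖ + ‖b • w‖ := norm_add_le _ _
        _ = a * ‖v‖ + b * ‖w‖ := by
          rw [norm_smul, norm_smul, Real.norm_of_nonneg ha, Real.norm_of_nonneg hb]
        _ ≤ a * 1 + b * 1 := by gcongr
        _ = 1 := by linarith
    · have := (convex_Iio (-(2 * ε))) (hv2 ht) (hw2 ht) ha hb hab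
      simpa using this
  have hloc : ∀ t, ∃ v, ∀ᶠ s in 𝓝 t, v ∈ T s := by
    intro t
    by_cases ht : I (γ t) = m
    · obtain ⟨v, hv1, hv2⟩ := (I' (γ t)).exists_lt_apply_of_lt_opNorm (hcon t ht)
      have : ∃ w : X, ‖w‖ ≤ 1 ∧ I' (γ t) w < -(2 * ε) := by
        rw [Real.norm_eq_abs, lt_abs] at hv2
        rcases hv2 with h | h
        · exact ⟨-v, by simpa using hv1.le, by rw [map_neg]; linarith⟩
        · exact ⟨v, hv1.le, by linarith⟩
      obtain ⟨w, hw1, hw2⟩ := this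
      refine ⟨w, ?_⟩
      have hc : Continuous fun s => I' (γ s) w :=
        (hcont.comp γ.continuous).clm_apply continuous_const
      have hn0 : t ≠ 0 := by rintro rfl; exact h0.ne ht
      have hn1 : t ≠ 1 := by rintro rfl; exact h1.ne ht
      filter_upwards [hc.continuousAt.eventually (gt_mem_nhds hw2), isOpen_ne.mem_nhds hn0,
        isOpen_ne.mem_nhds hn1] with s hs hs0 hs1
      exact ⟨hw1, fun _ => hs, fun h => (h.elim hs0 hs1).elim⟩
    · refine ⟨0, ?_⟩
      filter_upwards [(isOpen_ne_fun hIγ continuous_const).mem_nhds ht] with s hs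
      exact ⟨by simp, fun h => (hs h).elim, fun _ => rfl⟩
  obtain ⟨v, hv⟩ := exists_continuous_forall_mem_convex_of_local_const hTconv hloc
  let h : ℕ → ℝ := fun n => 1 / ((n : ℝ) + 1)
  have hpos : ∀ n, 0 < h n := fun n => Nat.one_div_pos_of_nat
  have hlim : Tendsto h atTop (𝓝 0) := tendsto_one_div_add_atTop_nhds_zero_nat
  have key : ∀ n, ∃ t, m - ε * h n ≤ I (γ t + h n • v t) := by
    intro n
    have hv0 : v 0 = 0 := (hv 0).2.2 (Or.inl rfl)
    have hv1 : v 1 = 0 := (hv 1).2.2 (Or.inr rfl)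
    obtain ⟨t, ht⟩ := hmin (γ + h n • v) (by simp [hv0]) (by simp [hv1])
    refine ⟨t, le_trans ?_ ht⟩
    have : dist γ (γ + h n • v) ≤ h n := by
      rw [ContinuousMap.dist_le (hpos n).le]
      intro s
      simp only [ContinuousMap.add_apply, ContinuousMap.smul_apply, dist_self_add_right]
      rw [norm_smul, Real.norm_of_nonneg (hpos n).le]
      exact mul_le_of_le_one_right (hpos n).le (hv s).1
    have := mul_le_mul_of_nonneg_left this hε.le
    linarith
  choose t ht using key
  obtain ⟨a, φ, hφ, hta⟩ := CompactSpace.tendsto_subseq t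
  have hh : Tendsto (fun n => h (φ n)) atTop (𝓝 0) := hlim.comp hφ.tendsto_atTop
  have hγa : Tendsto (fun n => γ (t (φ n))) atTop (𝓝 (γ a)) :=
    (γ.continuous.tendsto a).comp hta
  have hva : Tendsto (fun n => v (t (φ n))) atTop (𝓝 (v a)) :=
    (v.continuous.tendsto a).comp hta
  have hηa : Tendsto (fun n => γ (t (φ n)) + h (φ n) • v (t (φ n))) atTop (𝓝 (γ a)) := by
    simpa using hγa.add (hh.smul hva)
  have hMa : I (γ a) = m := by
    refine le_antisymm (hm a) ?_
    have e1 : Tendsto (fun n => m - ε * h (φ n)) atTop (𝓝 m) := by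
      simpa using (hh.const_mul ε).const_sub m
    exact le_of_tendsto_of_tendsto' e1 ((hIc.tendsto _).comp hηa) fun n => ht (φ n)
  have hstrict : HasStrictFDerivAt I (I' (γ a)) (γ a) :=
    hasStrictFDerivAt_of_hasFDerivAt_of_continuousAt (Eventually.of_forall hderiv)
      hcont.continuousAt
  have hev := (hηa.prodMk_nhds hγa).eventually
    (hstrict.isLittleO.def (show 0 < ε / 2 by positivity))
  have hge : -(3 / 2 * ε) ≤ I' (γ a) (v a) := by
    refine ge_of_tendsto (((I' (γ a)).continuous.tendsto _).comp hva) ?_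
    filter_upwards [hev] with n hn
    simp only [add_sub_cancel_left, map_smul, smul_eq_mul, norm_smul, Real.norm_eq_abs,
      abs_of_pos (hpos (φ n))] at hn
    have g1 := (abs_le.1 hn).2
    have g2 := ht (φ n)
    have g3 := hm (t (φ n))
    have g4 : ε / 2 * (h (φ n) * ‖v (t (φ n))‖) ≤ ε / 2 * (h (φ n) * 1) := by
      have := hpos (φ n)
      have := (hv (t (φ n))).1
      gcongr
    have g5 : h (φ n) * (-(3 / 2 * ε)) ≤ h (φ n) * I' (γ a) (v (t (φ n))) := by linarith
    exact le_of_mul_le_mul_left g5 (hpos _)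
  have := (hv a).2.1 hMa
  linarith

/-- **Lemma 2.4** (Mountain pass lemma of Ambrosetti–Rabinowitz). Let `I` be a `C¹`
functional on a Banach space `X` satisfying the Palais–Smale condition.  If `U ⊆ X` is open,
`u₀ ∈ U`, `u₁ ∉ closure U` and `inf_{∂U} I > max{I(u₀), I(u₁)}`, then `I` has a critical
point at the level `c = inf_{γ ∈ Γ} max_{γ([0,1])} I ≥ inf_{∂U} I`. -/
theorem mountain_pass {X : Type*} [NormedAddCommGroup X] [NormedSpace ℝ X] [CompleteSpace X]
    (I : X → ℝ) (I' : X → (X →L[ℝ] ℝ))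
    (hderiv : ∀ x, HasFDerivAt I (I' x) x) (hcont : Continuous I')
    (hPS : PalaisSmale I I')
    (U : Set X) (hU : IsOpen U) (u₀ u₁ : X) (hu₀ : u₀ ∈ U) (hu₁ : u₁ ∉ closure U)
    (hbdd : BddBelow (I '' frontier U))
    (hgap : max (I u₀) (I u₁) < sInf (I '' frontier U)) :
    ∃ x : X, I' x = 0 ∧ I x = mountainPassLevel I u₀ u₁ ∧
      sInf (I '' frontier U) ≤ mountainPassLevel I u₀ u₁ := by
  have hIc : Continuous I := continuous_iff_continuousAt.2 fun x => (hderiv x).continuousAt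
  let E := {γ : C(Icc (0:ℝ) 1, X) // γ 0 = u₀ ∧ γ 1 = u₁}
  have hEcl : IsClosed {γ : C(Icc (0:ℝ) 1, X) | γ 0 = u₀ ∧ γ 1 = u₁} :=
    (isClosed_eq (continuous_eval_const 0) continuous_const).inter
      (isClosed_eq (continuous_eval_const 1) continuous_const)
  have : CompleteSpace E := hEcl.completeSpace_coe
  let Φ : E → ℝ := fun γ => ⨆ t, I (γ.1 t)
  have hbd : ∀ γ : C(Icc (0:ℝ) 1, X), BddAbove (range fun t => I (γ t)) := fun γ =>
    (isCompact_range (hIc.comp γ.continuous)).bddAbove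
  have hΦ : LowerSemicontinuous Φ :=
    lowerSemicontinuous_ciSup (fun γ => hbd γ.1) fun t => Continuous.lowerSemicontinuous
      (hIc.comp ((continuous_eval_const t).comp continuous_subtype_val))
  have hle : ∀ (γ : E) t, I (γ.1 t) ≤ Φ γ := fun γ t => le_ciSup (hbd γ.1) t
  have hlow : ∀ γ : E, sInf (I '' frontier U) ≤ Φ γ := by
    intro γ
    have hne : (frontier (γ.1 ⁻¹' U)).Nonempty := by
      rw [nonempty_frontier_iff]
      refine ⟨⟨0, by simpa [γ.2.1] using hu₀⟩, fun hun => hu₁ (subset_closure ?_)⟩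
      have : (1 : Icc (0:ℝ) 1) ∈ γ.1 ⁻¹' U := hun ▸ mem_univ _
      simpa [γ.2.2] using this
    obtain ⟨t, ht⟩ := hne
    exact (csInf_le hbdd ⟨_, γ.1.continuous.frontier_preimage_subset U ht, rfl⟩).trans (hle γ t)
  have hset : {r : ℝ | ∃ γ : ℝ → X, ContinuousOn γ (Set.Icc 0 1) ∧ γ 0 = u₀ ∧ γ 1 = u₁ ∧
      r = sSup ((fun t => I (γ t)) '' Set.Icc (0:ℝ) 1)} = range Φ := by
    ext r
    constructor
    · rintro ⟨γ, hγ, h0, h1, rfl⟩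
      refine ⟨⟨⟨fun t => γ t, continuousOn_iff_continuous_domRestrict.1 hγ⟩, ?_, ?_⟩, ?_⟩
      · exact h0
      · exact h1
      · rw [sSup_image']; rfl
    · rintro ⟨γ, rfl⟩
      refine ⟨IccExtend zero_le_one γ.1, (γ.1.continuous.Icc_extend').continuousOn, ?_, ?_, ?_⟩
      · rw [IccExtend_left]; exact γ.2.1
      · rw [IccExtend_right]; exact γ.2.2
      · rw [sSup_image']
        exact iSup_congr fun t => by rw [IccExtend_val]
  have hE : Nonempty E := by
    refine ⟨⟨⟨fun t => u₀ + (t : ℝ) • (u₁ - u₀), by fun_prop⟩, ?_, ?_⟩⟩ <;> simp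
  have hc : mountainPassLevel I u₀ u₁ = ⨅ γ, Φ γ := by
    unfold mountainPassLevel
    rw [hset]; rfl
  set c := mountainPassLevel I u₀ u₁ with hcdef
  have hΦb : BddBelow (range Φ) := ⟨_, by rintro _ ⟨γ, rfl⟩; exact hlow γ⟩
  have hcle : ∀ γ, c ≤ Φ γ := fun γ => hc ▸ ciInf_le hΦb γ
  have hcge : sInf (I '' frontier U) ≤ c := hc ▸ le_ciInf hlow
  let e : ℕ → ℝ := fun n => 1 / ((n : ℝ) + 1)
  have hpos : ∀ n, 0 < e n := fun n => Nat.one_div_pos_of_nat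
  have hlim : Tendsto e atTop (𝓝 0) := tendsto_one_div_add_atTop_nhds_zero_nat
  have key : ∀ n, ∃ x, c ≤ I x ∧ I x ≤ c + e n ∧ ‖I' x‖ ≤ 2 * e n := by
    intro n
    obtain ⟨γ₀, hγ₀⟩ := exists_lt_of_ciInf_lt
      (show (⨅ γ, Φ γ) < c + e n by rw [← hc]; linarith [hpos n])
    obtain ⟨γ, hγ, hmin⟩ := ekeland_aux Φ hΦ c hcle (e n) (hpos n) γ₀
    have hg := max_lt_iff.1 (hgap.trans_le (hlow γ))
    obtain ⟨t, ht1, ht2⟩ := almost_crit_aux I I' hderiv hcont γ.1 (Φ γ) (e n) (hpos n) (hle γ)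
      (by rw [γ.2.1]; exact hg.1) (by rw [γ.2.2]; exact hg.2) (by
        intro η h0 h1
        let η' : E := ⟨η, h0.trans γ.2.1, h1.trans γ.2.2⟩
        have hm := hmin η'
        obtain ⟨t, -, ht⟩ := isCompact_univ.exists_isMaxOn (univ_nonempty)
          (hIc.comp η.continuous).continuousOn
        refine ⟨t, ?_⟩
        have h2 : Φ η' ≤ I (η t) := ciSup_le fun s => ht (mem_univ s)
        have h3 : dist γ η' = dist γ.1 η := rfl
        rw [h3] at hm
        linarith)
    exact ⟨γ.1 t, ht1 ▸ hcle γ, by linarith, ht2⟩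
  choose s hs1 hs2 hs3 using key
  have hI : Tendsto (fun n => I (s n)) atTop (𝓝 c) :=
    tendsto_of_tendsto_of_tendsto_of_le_of_le tendsto_const_nhds
      (by simpa using hlim.const_add c) hs1 hs2
  have hI' : Tendsto (fun n => ‖I' (s n)‖) atTop (𝓝 0) :=
    squeeze_zero (fun n => norm_nonneg _) hs3 (by simpa using hlim.const_mul 2)
  have hbdI : ∃ M : ℝ, ∀ j, |I (s j)| ≤ M := by
    obtain ⟨M, hM⟩ := hI.abs.bddAbove_range
    exact ⟨M, fun j => hM ⟨j, rfl⟩⟩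
  obtain ⟨x, σ, hσ, hx⟩ := hPS s hbdI hI'
  refine ⟨x, ?_, ?_, hcge⟩
  · have a1 := ((hcont.norm).tendsto x).comp hx
    have a2 := hI'.comp hσ.tendsto_atTop
    exact norm_eq_zero.1 (tendsto_nhds_unique a1 a2)
  · exact tendsto_nhds_unique ((hIc.tendsto x).comp hx) (hI.comp hσ.tendsto_atTop)

end
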